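/- Let (X, x0) and (Y, y0) be pointed compact Hausdorff spaces and let X ∨ Y denote their wedge sum (the quotient of the disjoint union of X and Y identifying x0 with y0). Then gsr(C(X ∨ Y)) = max{gsr(C(X)), gsr(C(Y))} and csr(C(X ∨ Y)) = max{csr(C(X)), csr(C(Y))} (as elements of ℕ ∪ {∞}), where C(Z) denotes the C*-algebra of continuous complex-valued functions on a compact Hausdorff space Z. -/

import Mathlib

/-!
The algebra `D = C(X ∨ Y)` retracts onto `A = C(X)` and onto `B = C(Y)`: inclusions of the two
summands give `π : D → A` and `π' : D → B`, collapsing the other summand gives sections `ι`, `ι'`.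
A function on the wedge that vanishes on `X` is pulled back from `Y`, so that
`π d = 0 → ι' (π' d) = d` (and likewise for `π d = 1`). For every `m ≥ 1` each of the two
properties "`GL_m` acts transitively on `Lg_m`" and "`Lg_m` is connected" then holds for `D` if and
only if it holds for both `A` and `B`.

Both properties pass from `D` to its retracts. Conversely, let `v ∈ Lg_m(D)` and let `e` be the
first standard basis vector. If `M ∈ GL_m(A)` takes `π v` to `e`, then `v' = ι(M) v` satisfies
`π v' = e`, hence `v' = ι' (π' v')`, and what remains is a problem over `B`. This settles
transitivity at once. For connectedness, `M` can be chosen in the identity path component of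
`GL_m(A)`, because the orbits of that component on `Lg_m(A)` are open
(`eventually_unitPathRel`) and `Lg_m(A)` is connected; then `v` is joined to `v'` inside `Lg_m(D)`,
and `v'` and `e` both lie in the connected set `ι' (Lg_m(B)) ⊆ Lg_m(D)`.
-/

open scoped unitInterval

noncomputable section

/-- The set of left unimodular vectors in `A^m`. -/
def Lg (m : ℕ) (A : Type*) [Ring A] : Set (Fin m → A) :=
  {v | ∃ w : Fin m → A, ∑ i, w i * v i = 1}

/-- `GL_m(A)` acts transitively on `Lg_m(A)`. -/
def GLtrans (m : ℕ) (A : Type*) [Ring A] : Prop :=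
  ∀ v ∈ Lg m A, ∀ w ∈ Lg m A,
    ∃ M : Matrix (Fin m) (Fin m) A, IsUnit M ∧ M.mulVec v = w

/-- The general stable rank: the least `n ≥ 1` such that `GL_m(A)` acts transitively on
`Lg_m(A)` for all `m ≥ n` (and `∞` if no such `n` exists). -/
def gsr (A : Type*) [Ring A] : ℕ∞ :=
  sInf {N : ℕ∞ | ∃ n : ℕ, N = n ∧ 1 ≤ n ∧ ∀ m : ℕ, n ≤ m → GLtrans m A}

/-- The connected stable rank: the least `n ≥ 1` such that `Lg_m(A)` is connected for all
`m ≥ n` (and `∞` if no such `n` exists). -/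
def csr (A : Type*) [Ring A] [TopologicalSpace A] : ℕ∞ :=
  sInf {N : ℕ∞ | ∃ n : ℕ, N = n ∧ 1 ≤ n ∧ ∀ m : ℕ, n ≤ m → IsConnected (Lg m A)}

/-- The gluing relation defining the wedge sum `X ∨ Y`. -/
def wedgeRel (X Y : Type*) (x0 : X) (y0 : Y) : X ⊕ Y → X ⊕ Y → Prop := fun a b =>
  a = Sum.inl x0 ∧ b = Sum.inr y0

/-- The wedge sum of two pointed spaces. -/
abbrev Wedge (X Y : Type*) [TopologicalSpace X] [TopologicalSpace Y] (x0 : X) (y0 : Y) :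
    Type _ :=
  Quot (wedgeRel X Y x0 y0)

/-- If `P` holds exactly when both `Q` and `R` hold (for positive integers), then the least
`n ≥ 1` from which on `P` holds is the maximum of the corresponding numbers for `Q` and `R`. -/
theorem sInf_rank_eq_max {P Q R : ℕ → Prop} (h : ∀ m, 1 ≤ m → (P m ↔ Q m ∧ R m)) :
    sInf {N : ℕ∞ | ∃ n : ℕ, N = n ∧ 1 ≤ n ∧ ∀ m : ℕ, n ≤ m → P m} =
      max (sInf {N : ℕ∞ | ∃ n : ℕ, N = n ∧ 1 ≤ n ∧ ∀ m : ℕ, n ≤ m → Q m})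
        (sInf {N : ℕ∞ | ∃ n : ℕ, N = n ∧ 1 ≤ n ∧ ∀ m : ℕ, n ≤ m → R m}) := by
  apply le_antisymm
  · rcases Set.eq_empty_or_nonempty
      {N : ℕ∞ | ∃ n : ℕ, N = n ∧ 1 ≤ n ∧ ∀ m : ℕ, n ≤ m → Q m} with hQ | hQ
    · simp [hQ]
    rcases Set.eq_empty_or_nonempty
      {N : ℕ∞ | ∃ n : ℕ, N = n ∧ 1 ≤ n ∧ ∀ m : ℕ, n ≤ m → R m} with hR | hR
    · simp [hR]
    obtain ⟨a, ha, ha1, haQ⟩ := csInf_mem hQ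
    obtain ⟨b, hb, hb1, hbR⟩ := csInf_mem hR
    rw [ha, hb]
    refine sInf_le ⟨max a b, (Nat.mono_cast.map_max).symm, le_max_of_le_left ha1, fun m hm => ?_⟩
    have h1 := (le_max_left a b).trans hm
    have h2 := (le_max_right a b).trans hm
    exact (h m (ha1.trans h1)).2 ⟨haQ m h1, hbR m h2⟩
  · apply max_le
    · apply sInf_le_sInf
      rintro _ ⟨n, rfl, h1, hP⟩
      exact ⟨n, rfl, h1, fun m hm => ((h m (h1.trans hm)).1 (hP m hm)).1⟩
    · apply sInf_le_sInf
      rintro _ ⟨n, rfl, h1, hP⟩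
      exact ⟨n, rfl, h1, fun m hm => ((h m (h1.trans hm)).1 (hP m hm)).2⟩

/-! ### Left unimodular vectors -/

section Algebra

variable {m : ℕ} {A B D : Type*} [CommRing A] [CommRing B] [CommRing D]

theorem Lg_map (f : A →+* B) {v : Fin m → A} (hv : v ∈ Lg m A) : f ∘ v ∈ Lg m B := by
  obtain ⟨w, hw⟩ := hv
  refine ⟨f ∘ w, ?_⟩
  change ∑ i, f (w i) * f (v i) = 1
  simp_rw [← map_mul, ← map_sum, hw, map_one]

theorem Lg_mulVec {M : Matrix (Fin m) (Fin m) A} (hM : IsUnit M) {v : Fin m → A}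
    (hv : v ∈ Lg m A) : M.mulVec v ∈ Lg m A := by
  obtain ⟨w, hw⟩ := hv
  obtain ⟨N, hN⟩ := hM.exists_left_inv
  refine ⟨Matrix.vecMul w N, ?_⟩
  change Matrix.vecMul w N ⬝ᵥ M.mulVec v = 1
  rw [← Matrix.dotProduct_mulVec, Matrix.mulVec_mulVec, hN, Matrix.one_mulVec]
  exact hw

theorem single_mem_Lg (k : ℕ) : (Pi.single 0 1 : Fin (k + 1) → A) ∈ Lg (k + 1) A :=
  ⟨Pi.single 0 1, by simp [Pi.single_apply]⟩

theorem comp_single (f : A →+* B) (k : ℕ) :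
    f ∘ (Pi.single 0 1 : Fin (k + 1) → A) = Pi.single 0 1 := by
  funext i
  simp only [Function.comp_apply, Pi.single_apply]
  split_ifs <;> simp

theorem comp_mulVec (f : A →+* B) (M : Matrix (Fin m) (Fin m) A) (v : Fin m → A) :
    f ∘ M.mulVec v = (M.map f).mulVec (f ∘ v) :=
  funext fun i => f.map_mulVec M v i

theorem isUnit_matrix_map (f : A →+* B) {M : Matrix (Fin m) (Fin m) A} (hM : IsUnit M) :
    IsUnit (M.map f) :=
  hM.map f.mapMatrix

/-- Transitivity of the action passes to a retract. -/
theorem GLtrans_of_retract (π : D →+* A) (ι : A →+* D) (h : ∀ a, π (ι a) = a)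
    (hD : GLtrans m D) : GLtrans m A := by
  intro v hv w hw
  obtain ⟨M, hM, hMv⟩ := hD _ (Lg_map ι hv) _ (Lg_map ι hw)
  refine ⟨M.map π, isUnit_matrix_map π hM, ?_⟩
  have hc : ∀ u : Fin m → A, π ∘ (ι ∘ u) = u := fun u => funext fun i => h (u i)
  have := congrArg (fun u => π ∘ u) hMv
  simpa only [comp_mulVec, hc] using this

theorem GLtrans_of_single {k : ℕ}
    (h : ∀ v ∈ Lg (k + 1) A, ∃ M : Matrix (Fin (k + 1)) (Fin (k + 1)) A,
      IsUnit M ∧ M.mulVec v = Pi.single 0 1) : GLtrans (k + 1) A := by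
  intro v hv w hw
  obtain ⟨M, hM, hMv⟩ := h v hv
  obtain ⟨N, ⟨N, rfl⟩, hNw⟩ := h w hw
  refine ⟨(↑N⁻¹ : Matrix (Fin (k + 1)) (Fin (k + 1)) A) * M, N⁻¹.isUnit.mul hM, ?_⟩
  rw [← Matrix.mulVec_mulVec, hMv, ← hNw, Matrix.mulVec_mulVec, Units.inv_mul,
    Matrix.one_mulVec]

/-- A vector over the pullback whose `A`-component is the basis vector comes from `B`. -/
theorem comp_eq_of_comp_single {k : ℕ} {π : D →+* A} {π' : D →+* B} {ι' : B →+* D}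
    (hker : ∀ d, π d = 0 → ι' (π' d) = d) {v : Fin (k + 1) → D}
    (hv : π ∘ v = Pi.single 0 1) : ι' ∘ (π' ∘ v) = v := by
  -- subtracting the basis vector, which every ring homomorphism fixes, reduces to `hker`
  funext i
  have h1 : ι' (π' ((Pi.single 0 1 : Fin (k + 1) → D) i)) = (Pi.single 0 1 : Fin (k + 1) → D) i := by
    have := congrFun (comp_single (ι'.comp π') k) i
    simpa using this
  have h2 : π (v i - (Pi.single 0 1 : Fin (k + 1) → D) i) = 0 := by
    have e1 := congrFun hv i
    have e2 := congrFun (comp_single π k) i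
    simp only [Function.comp_apply] at e1 e2
    rw [map_sub, e1, e2, sub_self]
  have h3 := hker _ h2
  rw [map_sub, map_sub, h1] at h3
  exact sub_left_injective h3

theorem GLtrans_pullback {k : ℕ} {π : D →+* A} {ι : A →+* D} {π' : D →+* B} {ι' : B →+* D}
    (h : ∀ a, π (ι a) = a) (hker : ∀ d, π d = 0 → ι' (π' d) = d)
    (hA : GLtrans (k + 1) A) (hB : GLtrans (k + 1) B) : GLtrans (k + 1) D := by
  apply GLtrans_of_single
  intro v hv
  obtain ⟨M, hM, hMv⟩ := hA _ (Lg_map π hv) _ (single_mem_Lg k)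
  have hv' := Lg_mulVec (isUnit_matrix_map ι hM) hv
  have hMM : (M.map ι).map π = M := by ext i j; simp [h]
  have hπ : π ∘ (M.map ι).mulVec v = Pi.single 0 1 := by
    rw [comp_mulVec, hMM, hMv]
  obtain ⟨N, hN, hNv⟩ := hB _ (Lg_map π' hv') _ (single_mem_Lg k)
  refine ⟨N.map ι' * M.map ι, (isUnit_matrix_map ι' hN).mul (isUnit_matrix_map ι hM), ?_⟩
  rw [← Matrix.mulVec_mulVec, ← comp_eq_of_comp_single hker hπ, ← comp_mulVec, hNv, comp_single]

end Algebra

/-! ### Orbits of the identity path component -/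

section Topology

open Topology

/-- `v` and `v'` lie in the same orbit of the identity path component of `GL_m(A)`, the paths
being taken in the set of invertible matrices. -/
def UnitPathRel {m : ℕ} {A : Type*} [CommRing A] [TopologicalSpace A] (v v' : Fin m → A) : Prop :=
  ∃ N : Matrix (Fin m) (Fin m) A, JoinedIn {M | IsUnit M} 1 N ∧ N.mulVec v = v'

section

variable {m : ℕ} {A : Type*} [CommRing A] [TopologicalSpace A] [IsTopologicalRing A]

theorem UnitPathRel.trans {u v w : Fin m → A} (h : UnitPathRel u v) (h' : UnitPathRel v w) :
    UnitPathRel u w := by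
  obtain ⟨N, hN, rfl⟩ := h
  obtain ⟨N', hN', rfl⟩ := h'
  refine ⟨N' * N, ?_, by rw [Matrix.mulVec_mulVec]⟩
  have := hN'.mul hN
  rw [mul_one] at this
  refine this.mono ?_
  rintro _ ⟨a, ha, b, hb, rfl⟩
  exact IsUnit.mul ha hb

theorem UnitPathRel.symm {v w : Fin m → A} (h : UnitPathRel v w) : UnitPathRel w v := by
  obtain ⟨N, hN, rfl⟩ := h
  obtain ⟨U, rfl⟩ : IsUnit N := hN.target_mem
  -- translating a path from `1` to `U` by `U⁻¹` gives a path from `U⁻¹` to `1`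
  refine ⟨(↑U⁻¹ : Matrix (Fin m) (Fin m) A), ?_, by
    rw [Matrix.mulVec_mulVec, Units.inv_mul, Matrix.one_mulVec]⟩
  have := hN.map (f := fun M => (↑U⁻¹ : Matrix (Fin m) (Fin m) A) * M) (by fun_prop)
  simp only [mul_one, Units.inv_mul] at this
  refine this.symm.mono ?_
  rintro _ ⟨a, ha, rfl⟩
  exact U⁻¹.isUnit.mul ha

end

section

variable {m : ℕ} {A : Type*} [NormedCommRing A] [NormedAlgebra ℝ A] [CompleteSpace A]

/-- Orbits of the identity path component on unimodular vectors are open: if `w ⬝ v = 1` and `v'`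
is close to `v`, the segment `1 + t (v' - v) wᵀ`, `0 ≤ t ≤ 1`, consists of invertible matrices and
its endpoint takes `v` to `v'`. -/
theorem eventually_unitPathRel {v : Fin m → A} (hv : v ∈ Lg m A) :
    ∀ᶠ v' in 𝓝 v, UnitPathRel v v' := by
  obtain ⟨w, hw⟩ := hv
  change w ⬝ᵥ v = 1 at hw
  have hcont : Continuous fun v' : Fin m → A => ‖w ⬝ᵥ (v' - v)‖ := by
    simp only [dotProduct]
    fun_prop
  have hev : ∀ᶠ v' in 𝓝 v, ‖w ⬝ᵥ (v' - v)‖ < 1 :=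
    hcont.continuousAt.eventually_lt_const (by simp)
  filter_upwards [hev] with v' hv'
  refine ⟨1 + Matrix.vecMulVec (v' - v) w, ?_, ?_⟩
  · refine JoinedIn.ofLine (f := fun t : ℝ => 1 + Matrix.vecMulVec (t • (v' - v)) w) ?_ ?_ ?_ ?_
    · apply Continuous.continuousOn
      refine continuous_const.add (continuous_matrix fun i j => ?_)
      simp only [Matrix.vecMulVec_apply, Pi.smul_apply]
      fun_prop
    · simp
    · simp
    · rintro _ ⟨t, ⟨ht0, ht1⟩, rfl⟩
      change IsUnit (1 + Matrix.vecMulVec (t • (v' - v)) w)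
      rw [Matrix.isUnit_iff_isUnit_det, Matrix.vecMulVec_eq Unit,
        Matrix.det_one_add_replicateCol_mul_replicateRow, dotProduct_smul,
        ← sub_neg_eq_add]
      apply isUnit_one_sub_of_norm_lt_one
      rw [norm_neg, norm_smul, Real.norm_of_nonneg ht0]
      exact (mul_le_of_le_one_left (norm_nonneg _) ht1).trans_lt hv'
  · rw [Matrix.add_mulVec, Matrix.one_mulVec, Matrix.vecMulVec_mulVec, hw]
    simp

theorem unitPathRel_of_isPreconnected (h : IsPreconnected (Lg m A)) {v v' : Fin m → A}
    (hv : v ∈ Lg m A) (hv' : v' ∈ Lg m A) : UnitPathRel v v' :=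
  h.induction₂ UnitPathRel
    (fun _ hx => (eventually_unitPathRel hx).filter_mono nhdsWithin_le_nhds)
    (fun _ _ _ _ _ _ => UnitPathRel.trans) (fun _ _ _ _ => UnitPathRel.symm) hv hv'

end

/-! ### Connectedness of the set of unimodular vectors -/

theorem isConnected_Lg_of_retract {m : ℕ} {A D : Type*} [CommRing A] [CommRing D]
    [TopologicalSpace A] [TopologicalSpace D]
    (π : D →+* A) (ι : A →+* D) (hπ : Continuous π) (h : ∀ a, π (ι a) = a)
    (hD : IsConnected (Lg m D)) : IsConnected (Lg m A) := by
  have : (fun v : Fin m → D => π ∘ v) '' Lg m D = Lg m A := by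
    apply Set.Subset.antisymm
    · rintro _ ⟨v, hv, rfl⟩
      exact Lg_map π hv
    · intro v hv
      exact ⟨ι ∘ v, Lg_map ι hv, funext fun i => h (v i)⟩
  rw [← this]
  refine hD.image _ (Continuous.continuousOn ?_)
  exact continuous_pi fun i => hπ.comp (continuous_apply i)

theorem isConnected_Lg_pullback {k : ℕ} {A B D : Type*} [NormedCommRing A] [NormedAlgebra ℝ A]
    [CompleteSpace A] [CommRing B] [TopologicalSpace B] [CommRing D] [TopologicalSpace D]
    [IsTopologicalRing D]
    {π : D →+* A} {ι : A →+* D} {π' : D →+* B} {ι' : B →+* D}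
    (hι : Continuous ι) (hι' : Continuous ι')
    (h : ∀ a, π (ι a) = a) (hker : ∀ d, π d = 0 → ι' (π' d) = d)
    (hA : IsConnected (Lg (k + 1) A)) (hB : IsConnected (Lg (k + 1) B)) :
    IsConnected (Lg (k + 1) D) := by
  refine ⟨⟨_, single_mem_Lg k⟩, isPreconnected_of_forall (Pi.single 0 1) ?_⟩
  intro v hv
  obtain ⟨N, hN, hNv⟩ :=
    unitPathRel_of_isPreconnected hA.isPreconnected (Lg_map π hv) (single_mem_Lg k)
  have hNN : (N.map ι).map π = N := by ext i j; simp [h]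
  have hπ : π ∘ (N.map ι).mulVec v = Pi.single 0 1 := by
    rw [comp_mulVec, hNN, hNv]
  have hJ : JoinedIn (Lg (k + 1) D) v ((N.map ι).mulVec v) := by
    have hc : Continuous fun M : Matrix (Fin (k + 1)) (Fin (k + 1)) A => (M.map ι).mulVec v :=
      (continuous_id.matrix_map hι).matrix_mulVec continuous_const
    have := hN.map hc
    rw [Matrix.map_one ι (map_zero ι) (map_one ι), Matrix.one_mulVec] at this
    refine this.mono ?_
    rintro _ ⟨M, hM, rfl⟩
    exact Lg_mulVec (isUnit_matrix_map ι hM) hv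
  obtain ⟨γ, hγ⟩ := hJ
  -- the path from `v` to `v' = ι(N) v`, followed by the connected set `ι' (Lg B)` through `v'`
  have hv' : ι' ∘ (π' ∘ (N.map ι).mulVec v) = (N.map ι).mulVec v :=
    comp_eq_of_comp_single hker hπ
  have hv'mem : (N.map ι).mulVec v ∈ Lg (k + 1) D := γ.target ▸ hγ 1
  refine ⟨(fun u : Fin (k + 1) → B => ι' ∘ u) '' Lg (k + 1) B ∪ Set.range γ, ?_, ?_, ?_, ?_⟩
  · rintro _ (⟨u, hu, rfl⟩ | ⟨t, rfl⟩)
    · exact Lg_map ι' hu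
    · exact hγ t
  · exact Or.inl ⟨_, single_mem_Lg k, comp_single ι' k⟩
  · exact Or.inr ⟨0, γ.source⟩
  · refine IsPreconnected.union _ ⟨_, Lg_map π' hv'mem, hv'⟩ ⟨1, γ.target⟩
      (hB.isPreconnected.image _ (Continuous.continuousOn ?_)) (isPreconnected_range γ.continuous)
    exact continuous_pi fun i => hι'.comp (continuous_apply i)

end Topology

/-! ### The wedge sum -/

section WedgeMaps

variable {X Y : Type*} [TopologicalSpace X] [TopologicalSpace Y] (x0 : X) (y0 : Y)

/-- Inclusion of the first summand. -/
def wedgeInl : C(X, Wedge X Y x0 y0) :=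
  ⟨fun x => Quot.mk _ (Sum.inl x), continuous_quot_mk.comp continuous_inl⟩

/-- Inclusion of the second summand. -/
def wedgeInr : C(Y, Wedge X Y x0 y0) :=
  ⟨fun y => Quot.mk _ (Sum.inr y), continuous_quot_mk.comp continuous_inr⟩

/-- Retraction onto the first summand, collapsing the second to the base point. -/
def wedgeFst : C(Wedge X Y x0 y0, X) :=
  ⟨Quot.lift (Sum.elim id fun _ => x0) (by rintro _ _ ⟨rfl, rfl⟩; rfl),
    continuous_quot_lift _ (continuous_id.sumElim continuous_const)⟩

/-- Retraction onto the second summand, collapsing the first to the base point. -/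
def wedgeSnd : C(Wedge X Y x0 y0, Y) :=
  ⟨Quot.lift (Sum.elim (fun _ => y0) id) (by rintro _ _ ⟨rfl, rfl⟩; rfl),
    continuous_quot_lift _ (continuous_const.sumElim continuous_id)⟩

/-- Precomposition with a continuous map, as a ring homomorphism of function algebras. -/
def precompHom {S T : Type*} [TopologicalSpace S] [TopologicalSpace T] (f : C(S, T)) :
    C(T, ℂ) →+* C(S, ℂ) :=
  (ContinuousMap.compRightAlgHom ℂ ℂ f).toRingHom

theorem continuous_precompHom {S T : Type*} [TopologicalSpace S] [TopologicalSpace T]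
    (f : C(S, T)) : Continuous (precompHom f) :=
  ContinuousMap.continuous_precomp f

theorem precomp_inl_fst (a : C(X, ℂ)) :
    precompHom (wedgeInl x0 y0) (precompHom (wedgeFst x0 y0) a) = a := rfl

theorem precomp_inr_snd (b : C(Y, ℂ)) :
    precompHom (wedgeInr x0 y0) (precompHom (wedgeSnd x0 y0) b) = b := rfl

/-- A function on the wedge vanishing on the first summand is pulled back from the second. -/
theorem precomp_snd_inr_of_eq_zero (d : C(Wedge X Y x0 y0, ℂ))
    (hd : precompHom (wedgeInl x0 y0) d = 0) :
    precompHom (wedgeSnd x0 y0) (precompHom (wedgeInr x0 y0) d) = d := by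
  have hd' : ∀ x, d (Quot.mk _ (Sum.inl x)) = 0 := fun x => DFunLike.congr_fun hd x
  ext p
  induction p using Quot.ind with
  | mk p =>
    cases p with
    | inr y => rfl
    | inl x =>
      -- both sides vanish: the left one is the value of `d` at the base point
      change d (Quot.mk _ (Sum.inr y0)) = d (Quot.mk _ (Sum.inl x))
      rw [hd', ← hd' x0]
      exact congrArg d (Quot.sound ⟨rfl, rfl⟩).symm

end WedgeMaps

/-- **Theorem.** For pointed compact Hausdorff spaces `(X, x0)` and `(Y, y0)`,
`gsr(C(X ∨ Y)) = max {gsr(C(X)), gsr(C(Y))}` and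
`csr(C(X ∨ Y)) = max {csr(C(X)), csr(C(Y))}`. -/
theorem gsr_csr_wedge {X Y : Type*} [TopologicalSpace X] [CompactSpace X] [T2Space X]
    [TopologicalSpace Y] [CompactSpace Y] [T2Space Y] (x0 : X) (y0 : Y) :
    gsr (ContinuousMap (Wedge X Y x0 y0) ℂ)
        = max (gsr (ContinuousMap X ℂ)) (gsr (ContinuousMap Y ℂ)) ∧
      csr (ContinuousMap (Wedge X Y x0 y0) ℂ)
        = max (csr (ContinuousMap X ℂ)) (csr (ContinuousMap Y ℂ)) := by
  constructor
  · refine sInf_rank_eq_max fun m hm => ?_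
    obtain ⟨k, rfl⟩ := Nat.exists_eq_add_of_le' hm
    exact ⟨fun h => ⟨GLtrans_of_retract _ _ (precomp_inl_fst x0 y0) h,
        GLtrans_of_retract _ _ (precomp_inr_snd x0 y0) h⟩,
      fun h => GLtrans_pullback (precomp_inl_fst x0 y0) (precomp_snd_inr_of_eq_zero x0 y0)
        h.1 h.2⟩
  · refine sInf_rank_eq_max fun m hm => ?_
    obtain ⟨k, rfl⟩ := Nat.exists_eq_add_of_le' hm
    exact ⟨fun h =>
        ⟨isConnected_Lg_of_retract _ _ (continuous_precompHom _) (precomp_inl_fst x0 y0) h,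
          isConnected_Lg_of_retract _ _ (continuous_precompHom _) (precomp_inr_snd x0 y0) h⟩,
      fun h => isConnected_Lg_pullback (continuous_precompHom _) (continuous_precompHom _)
        (precomp_inl_fst x0 y0) (precomp_snd_inr_of_eq_zero x0 y0) h.1 h.2⟩

end
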